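/- Let ρ be a unital endomorphism of a unital C*-algebra A with weak permutation symmetry ε. Then the C*-algebra O_[ρ] generated by the spaces [ρ^r, ρ^s] := { t ∈ (ρ^r, ρ^s) : ε(s,1) t = ρ(t) ε(r,1) } is ρ-stable and is a Z^ρ-algebra, where Z^ρ := { f ∈ Z(A) : ρ(fa) = fρ(a) for all a ∈ A }. -/

import Mathlib

/-!
STATEMENT 14: Let `ρ` be a unital endomorphism of a unital C*-algebra `A` with weak
permutation symmetry `ε`. Then the C*-algebra `O_[ρ]` generated by the spaces
`[ρ^r, ρ^s] := { t ∈ (ρ^r, ρ^s) : ε(s,1) t = ρ(t) ε(r,1) }` is `ρ`-stable and is a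
`Z^ρ`-algebra, where `Z^ρ := { f ∈ Z(A) : ρ(fa) = fρ(a) for all a ∈ A }`.
-/

open scoped BigOperators

/-- `p ∈ P_∞`: a permutation of `ℕ` with finite support. -/
def FinitelySupportedPerm (p : Equiv.Perm ℕ) : Prop :=
  {n : ℕ | p n ≠ n}.Finite

/-- The shift `S` on permutations of `ℕ`: `(Sp)(0) = 0`, `(Sp)(n+1) = p(n) + 1`. -/
def shiftPerm (p : Equiv.Perm ℕ) : Equiv.Perm ℕ where
  toFun n := Nat.casesOn n 0 fun m => p m + 1
  invFun n := Nat.casesOn n 0 fun m => p.symm m + 1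
  left_inv n := by
    cases n with
    | zero => rfl
    | succ m => show p.symm (p m) + 1 = m + 1; rw [Equiv.symm_apply_apply]
  right_inv n := by
    cases n with
    | zero => rfl
    | succ m => show p (p.symm m) + 1 = m + 1; rw [Equiv.apply_symm_apply]

/-- The block permutation `(r,s) ∈ P_{r+s} ⊂ P_∞` exchanging the first `r` terms with
the following `s` terms. -/
def blockPerm (r s : ℕ) : Equiv.Perm ℕ where
  toFun n := if n < r then n + s else if n < r + s then n - r else n
  invFun n := if n < s then n + r else if n < r + s then n - s else n
  left_inv n := by dsimp only; split_ifs <;> omega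
  right_inv n := by dsimp only; split_ifs <;> omega

/-- The intertwiner space `(ρ^r, ρ^s) = { t ∈ A : ρ^s(a) t = t ρ^r(a) }` of a unital
endomorphism `ρ` of a unital C*-algebra `A`. -/
def intertwinerSpace {A : Type*} [CStarAlgebra A] (ρ : A →⋆ₐ[ℂ] A) (r s : ℕ) : Set A :=
  {t : A | ∀ a : A, (⇑ρ)^[s] a * t = t * (⇑ρ)^[r] a}

/-- `ε` is a weak permutation symmetry for `ρ`: a unitary representation of the group
`P_∞` of finitely supported permutations of `ℕ` in `A` with `ε(Sp) = ρ(ε(p))` and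
`ε(1,1) ∈ (ρ², ρ²)`. -/
structure IsWeakPermSym {A : Type*} [CStarAlgebra A] (ρ : A →⋆ₐ[ℂ] A)
    (ε : Equiv.Perm ℕ → A) : Prop where
  map_one : ε 1 = 1
  map_mul : ∀ p q : Equiv.Perm ℕ, FinitelySupportedPerm p → FinitelySupportedPerm q →
    ε (p * q) = ε p * ε q
  unitary : ∀ p : Equiv.Perm ℕ, FinitelySupportedPerm p →
    star (ε p) * ε p = 1 ∧ ε p * star (ε p) = 1
  shift : ∀ p : Equiv.Perm ℕ, FinitelySupportedPerm p → ε (shiftPerm p) = ρ (ε p)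
  flip_mem : ε (blockPerm 1 1) ∈ intertwinerSpace ρ 2 2

/-- The space `[ρ^r, ρ^s]` of intertwiners compatible with the weak permutation
symmetry `ε`. -/
def symIntertwinerSpace {A : Type*} [CStarAlgebra A] (ρ : A →⋆ₐ[ℂ] A)
    (ε : Equiv.Perm ℕ → A) (r s : ℕ) : Set A :=
  {t ∈ intertwinerSpace ρ r s | ε (blockPerm s 1) * t = ρ t * ε (blockPerm r 1)}

/-- `O_[ρ]`: the C*-subalgebra of `A` generated by the spaces `[ρ^r, ρ^s]`. -/
def symDRAlgebra {A : Type*} [CStarAlgebra A] (ρ : A →⋆ₐ[ℂ] A)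
    (ε : Equiv.Perm ℕ → A) : StarSubalgebra ℂ A :=
  (StarAlgebra.adjoin ℂ (⋃ r : ℕ, ⋃ s : ℕ, symIntertwinerSpace ρ ε r s)).topologicalClosure

/-- `Z^ρ := { f ∈ Z(A) : ρ(fa) = f ρ(a) for all a }`. -/
def endoCenter {A : Type*} [CStarAlgebra A] (ρ : A →⋆ₐ[ℂ] A) : Set A :=
  {f : A | f ∈ Set.center A ∧ ∀ a : A, ρ (f * a) = f * ρ a}

/-!
The symmetry of `t ∈ [ρ^r, ρ^s]` reads `ρ t = ε(s,1) t ε(r,1)*`, so `ρ`-stability follows once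
`ε(P_∞) ⊆ O_[ρ]`. The group `P_∞` is generated by the transpositions `(i i+1)`, and `ε` maps
`(i i+1)` into `[ρ^(i+2), ρ^(i+2)]`: its value is `ρ^i(ε(1,1))`, which intertwines `ρ^(i+2)` with
itself, and conjugation by `(n,1)` is the shift on `P_n`. Finally, `Z^ρ ⊆ [ρ^0, ρ^0]`.
-/

theorem finitelySupportedPerm_of_forall_ge {n : ℕ} {p : Equiv.Perm ℕ}
    (hp : ∀ m, n ≤ m → p m = m) : FinitelySupportedPerm p :=
  (Set.finite_lt_nat n).subset fun m hm ↦ not_le.1 fun hle ↦ hm (hp m hle)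

theorem blockPerm_apply (r s n : ℕ) :
    blockPerm r s n = if n < r then n + s else if n < r + s then n - r else n := rfl

theorem blockPerm_one_one : blockPerm 1 1 = Equiv.swap 0 1 := by
  ext n
  rw [blockPerm_apply, Equiv.swap_apply_def]
  split_ifs <;> omega

theorem finitelySupportedPerm_blockPerm (r s : ℕ) : FinitelySupportedPerm (blockPerm r s) :=
  finitelySupportedPerm_of_forall_ge (n := r + s) fun m hm ↦ by
    rw [blockPerm_apply, if_neg (by omega), if_neg (by omega)]

theorem shiftPerm_succ (p : Equiv.Perm ℕ) (n : ℕ) : shiftPerm p (n + 1) = p n + 1 := rfl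

theorem finitelySupportedPerm_shiftPerm {p : Equiv.Perm ℕ} (hp : FinitelySupportedPerm p) :
    FinitelySupportedPerm (shiftPerm p) := by
  refine (hp.image (· + 1)).subset fun n hn ↦ ?_
  cases n with
  | zero => exact absurd rfl hn
  | succ n => exact ⟨n, fun h ↦ hn (congrArg (· + 1) h), rfl⟩

theorem shiftPerm_swap (i j : ℕ) :
    shiftPerm (Equiv.swap i j) = Equiv.swap (i + 1) (j + 1) := by
  ext n
  cases n with
  | zero => exact (Equiv.swap_apply_of_ne_of_ne i.succ_ne_zero.symm j.succ_ne_zero.symm).symm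
  | succ n =>
    rw [shiftPerm_succ, Equiv.swap_apply_def, Equiv.swap_apply_def]
    split_ifs <;> omega

theorem blockPerm_mul_eq_shiftPerm_mul {n : ℕ} {p : Equiv.Perm ℕ} (hp : ∀ m, n ≤ m → p m = m) :
    blockPerm n 1 * p = shiftPerm p * blockPerm n 1 := by
  ext m
  simp only [Equiv.Perm.mul_apply]
  rcases lt_trichotomy m n with hlt | rfl | hgt
  · have hpm : p m < n := by
      by_contra! hle
      exact (hlt.trans_le hle).ne (p.injective (hp _ hle)).symm
    rw [blockPerm_apply, blockPerm_apply, if_pos hpm, if_pos hlt, shiftPerm_succ]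
  · have hblock : blockPerm m 1 m = 0 := by simp [blockPerm_apply]
    rw [hp m le_rfl, hblock]
    rfl
  · obtain ⟨m, rfl⟩ := Nat.exists_eq_add_one_of_ne_zero (Nat.ne_zero_of_lt hgt)
    have hblock : blockPerm n 1 (m + 1) = m + 1 := by
      rw [blockPerm_apply, if_neg (by omega), if_neg (by omega)]
    rw [hp _ hgt.le, hblock, shiftPerm_succ, hp m (by omega)]

theorem swap_mem_closure_range_swap_succ (i j : ℕ) :
    Equiv.swap i j ∈ Subgroup.closure (Set.range fun k : ℕ ↦ Equiv.swap k (k + 1)) := by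
  wlog hij : i ≤ j generalizing i j
  · rw [Equiv.swap_comm]
    exact this j i (le_of_not_ge hij)
  induction j, hij using Nat.le_induction with
  | base => exact Equiv.swap_self i ▸ one_mem _
  | succ j _ ih =>
    exact SubmonoidClass.swap_mem_trans _ ih (Subgroup.subset_closure ⟨j, rfl⟩)

theorem finitelySupportedPerm_iff_mem_closure_range_swap_succ {p : Equiv.Perm ℕ} :
    FinitelySupportedPerm p ↔
      p ∈ Subgroup.closure (Set.range fun k : ℕ ↦ Equiv.swap k (k + 1)) := by
  refine (mem_closure_isSwap' (f := p)).symm.trans ⟨fun hp ↦ ?_, fun hp ↦ ?_⟩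
  · refine (Subgroup.closure_le _).2 ?_ hp
    rintro _ ⟨i, j, -, rfl⟩
    exact swap_mem_closure_range_swap_succ i j
  · refine Subgroup.closure_mono ?_ hp
    rintro _ ⟨k, rfl⟩
    exact ⟨k, k + 1, k.succ_ne_self.symm, rfl⟩

theorem finitelySupportedPerm_inv {p : Equiv.Perm ℕ} (hp : FinitelySupportedPerm p) :
    FinitelySupportedPerm p⁻¹ := by
  rw [finitelySupportedPerm_iff_mem_closure_range_swap_succ] at hp ⊢
  exact inv_mem hp

theorem finitelySupportedPerm_swap (i j : ℕ) : FinitelySupportedPerm (Equiv.swap i j) :=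
  finite_compl_fixedBy_swap

section

variable {A : Type*} [CStarAlgebra A] {ρ : A →⋆ₐ[ℂ] A} {ε : Equiv.Perm ℕ → A}

theorem iterate_mem_intertwinerSpace {r s : ℕ} {t : A} (ht : t ∈ intertwinerSpace ρ r s) (i : ℕ) :
    (⇑ρ)^[i] t ∈ intertwinerSpace ρ (i + r) (i + s) := fun a ↦ by
  rw [Function.iterate_add_apply, Function.iterate_add_apply, ← iterate_map_mul,
    ← iterate_map_mul, ht a]

theorem mem_intertwinerSpace_zero_zero {f : A} :
    f ∈ intertwinerSpace ρ 0 0 ↔ f ∈ Set.center A :=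
  Semigroup.mem_center_iff.symm

theorem map_eq_self_of_mem_endoCenter {f : A} (hf : f ∈ endoCenter ρ) : ρ f = f := by
  simpa only [mul_one, map_one] using hf.2 1

theorem endoCenter_subset_symIntertwinerSpace :
    endoCenter ρ ⊆ symIntertwinerSpace ρ ε 0 0 := fun f hf ↦
  ⟨mem_intertwinerSpace_zero_zero.2 hf.1, by
    rw [map_eq_self_of_mem_endoCenter hf, (Set.mem_center_iff.1 hf.1).comm]⟩

theorem symIntertwinerSpace_subset_symDRAlgebra (r s : ℕ) :
    symIntertwinerSpace ρ ε r s ⊆ symDRAlgebra ρ ε := fun _ ht ↦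
  StarSubalgebra.le_topologicalClosure _
    (StarAlgebra.subset_adjoin ℂ _ (Set.mem_iUnion₂.2 ⟨r, s, ht⟩))

theorem symDRAlgebra_le {B : StarSubalgebra ℂ A} (hB : IsClosed (B : Set A))
    (h : ∀ r s, symIntertwinerSpace ρ ε r s ⊆ B) : symDRAlgebra ρ ε ≤ B :=
  StarSubalgebra.topologicalClosure_minimal (StarAlgebra.adjoin_le (Set.iUnion₂_subset h)) hB

namespace IsWeakPermSym

theorem map_inv_eq_star (hε : IsWeakPermSym ρ ε) {p : Equiv.Perm ℕ} (hp : FinitelySupportedPerm p) :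
    ε p⁻¹ = star (ε p) :=
  (left_inv_eq_right_inv (hε.unitary p hp).1 <| by
    rw [← hε.map_mul _ _ hp (finitelySupportedPerm_inv hp), mul_inv_cancel, hε.map_one]).symm

theorem map_swap_succ (hε : IsWeakPermSym ρ ε) (i : ℕ) :
    ε (Equiv.swap i (i + 1)) = (⇑ρ)^[i] (ε (blockPerm 1 1)) := by
  induction i with
  | zero => rw [blockPerm_one_one, Function.iterate_zero_apply]
  | succ i ih =>
    rw [← shiftPerm_swap, hε.shift _ (finitelySupportedPerm_swap _ _), ih,
      Function.iterate_succ_apply']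

theorem map_blockPerm_mul_map (hε : IsWeakPermSym ρ ε) {n : ℕ} {p : Equiv.Perm ℕ}
    (hp : ∀ m, n ≤ m → p m = m) :
    ε (blockPerm n 1) * ε p = ρ (ε p) * ε (blockPerm n 1) := by
  have hblock := finitelySupportedPerm_blockPerm n 1
  have hfin : FinitelySupportedPerm p := finitelySupportedPerm_of_forall_ge hp
  rw [← hε.shift p hfin, ← hε.map_mul _ _ hblock hfin, blockPerm_mul_eq_shiftPerm_mul hp,
    hε.map_mul _ _ (finitelySupportedPerm_shiftPerm hfin) hblock]

theorem map_swap_succ_mem_symIntertwinerSpace (hε : IsWeakPermSym ρ ε) (i : ℕ) :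
    ε (Equiv.swap i (i + 1)) ∈ symIntertwinerSpace ρ ε (i + 2) (i + 2) := by
  refine ⟨?_, hε.map_blockPerm_mul_map fun m hm ↦ ?_⟩
  · rw [hε.map_swap_succ]
    exact iterate_mem_intertwinerSpace hε.flip_mem i
  · exact Equiv.swap_apply_of_ne_of_ne (by omega) (by omega)

theorem map_mem_symDRAlgebra (hε : IsWeakPermSym ρ ε) {p : Equiv.Perm ℕ}
    (hp : FinitelySupportedPerm p) : ε p ∈ symDRAlgebra ρ ε := by
  rw [finitelySupportedPerm_iff_mem_closure_range_swap_succ] at hp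
  induction hp using Subgroup.closure_induction with
  | mem p hp =>
    obtain ⟨i, rfl⟩ := hp
    exact symIntertwinerSpace_subset_symDRAlgebra _ _ (hε.map_swap_succ_mem_symIntertwinerSpace i)
  | one => exact hε.map_one ▸ one_mem _
  | mul p q hp hq ihp ihq =>
    rw [← finitelySupportedPerm_iff_mem_closure_range_swap_succ] at hp hq
    exact hε.map_mul p q hp hq ▸ mul_mem ihp ihq
  | inv p hp ih =>
    rw [← finitelySupportedPerm_iff_mem_closure_range_swap_succ] at hp
    exact hε.map_inv_eq_star hp ▸ star_mem ih

theorem map_eq_mul_mul_star (hε : IsWeakPermSym ρ ε) {r s : ℕ} {t : A}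
    (ht : t ∈ symIntertwinerSpace ρ ε r s) :
    ρ t = ε (blockPerm s 1) * t * star (ε (blockPerm r 1)) := by
  rw [ht.2, mul_assoc, (hε.unitary _ (finitelySupportedPerm_blockPerm r 1)).2, mul_one]

theorem symDRAlgebra_le_comap (hε : IsWeakPermSym ρ ε) :
    symDRAlgebra ρ ε ≤ (symDRAlgebra ρ ε).comap ρ := by
  have hρ : Continuous ρ := 
    AddMonoidHomClass.continuous_of_bound ρ 1 fun a ↦ by
      simpa only [one_mul] using NonUnitalStarAlgHom.norm_apply_le ρ a
  refine symDRAlgebra_le ((StarSubalgebra.isClosed_topologicalClosure _).preimage hρ)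
    fun r s t ht ↦ ?_
  have hblock (n : ℕ) : ε (blockPerm n 1) ∈ symDRAlgebra ρ ε :=
    hε.map_mem_symDRAlgebra (finitelySupportedPerm_blockPerm n 1)
  have hmem : ρ t ∈ symDRAlgebra ρ ε := by
    rw [hε.map_eq_mul_mul_star ht]
    exact mul_mem (mul_mem (hblock s) (symIntertwinerSpace_subset_symDRAlgebra r s ht))
      (star_mem (hblock r))
  exact hmem

end IsWeakPermSym

end

/-- `O_[ρ]` is `ρ`-stable and is a `Z^ρ`-algebra (i.e. `Z^ρ` acts on `O_[ρ]` by central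
multipliers; the action is unital, hence nondegenerate, since `O_[ρ]` is unital). -/
theorem symDRAlgebra_rho_stable_and_endoCenter_algebra
    {A : Type*} [CStarAlgebra A] (ρ : A →⋆ₐ[ℂ] A) (ε : Equiv.Perm ℕ → A)
    (hε : IsWeakPermSym ρ ε) :
    (∀ b ∈ symDRAlgebra ρ ε, ρ b ∈ symDRAlgebra ρ ε) ∧
    (∀ f ∈ endoCenter ρ, ∀ b ∈ symDRAlgebra ρ ε,
      f * b ∈ symDRAlgebra ρ ε ∧ f * b = b * f) := by
  refine ⟨fun b hb ↦ hε.symDRAlgebra_le_comap hb, fun f hf b hb ↦ ⟨?_, ?_⟩⟩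
  · have hfO : f ∈ symDRAlgebra ρ ε :=
      symIntertwinerSpace_subset_symDRAlgebra 0 0 (endoCenter_subset_symIntertwinerSpace hf)
    exact mul_mem hfO hb
  · exact (Set.mem_center_iff.1 hf.1).comm b
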